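/- For any sequence D = (D_n)_{n=1}^∞ of nonempty open subsets of [0,1] forming a base for the topology of [0,1], the space X_D = (C[0,1], ‖·‖_D) has the local diameter 2 property +: for every norm-one functional x* on X_D, every ε > 0, every δ > 0, and every x in the slice S(x*,ε) with ‖x‖_D = 1, there exists y ∈ S(x*,ε) with ‖x − y‖_D > 2 − δ. -/

import Mathlib

open Set Filter Topology

/-- The `n`-th seminorm: `‖x‖ₙ = sup_{d ∈ Dₙ} |x d|`. -/
noncomputable def seminormD (D : ℕ → Set (Icc (0:ℝ) 1)) (n : ℕ)
    (x : C(Icc (0:ℝ) 1, ℝ)) : ℝ :=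
  ⨆ d : D n, |x d|

/-- The norm `‖x‖_D = (Σₙ 2⁻ⁿ ‖x‖ₙ²)^{1/2}` (indexing the sequence from `0`,
with weight `2^{-(n+1)}`). -/
noncomputable def normD (D : ℕ → Set (Icc (0:ℝ) 1)) (x : C(Icc (0:ℝ) 1, ℝ)) : ℝ :=
  Real.sqrt (∑' n : ℕ, (1 / 2 : ℝ) ^ (n + 1) * (seminormD D n x) ^ 2)

/-- `f` is a norm-one linear functional on `X_D = (C[0,1], ‖·‖_D)`:
it is bounded by `‖·‖_D` and its norm (the supremum of `|f x|` over the
`‖·‖_D`-unit ball) equals `1`. -/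
def DualNormOneD (D : ℕ → Set (Icc (0:ℝ) 1)) (f : C(Icc (0:ℝ) 1, ℝ) →ₗ[ℝ] ℝ) : Prop :=
  (∀ x, |f x| ≤ normD D x) ∧ ∀ c : ℝ, c < 1 → ∃ x, normD D x ≤ 1 ∧ c < |f x|

lemma sD_bdd (D : ℕ → Set (Icc (0:ℝ) 1)) (n : ℕ) (x : C(Icc (0:ℝ) 1, ℝ)) :
    BddAbove (Set.range fun d : D n => |x d|) :=
  ⟨‖x‖, by rintro _ ⟨d, rfl⟩; exact x.norm_coe_le_norm d⟩

lemma le_sD (D : ℕ → Set (Icc (0:ℝ) 1)) (n : ℕ) (x : C(Icc (0:ℝ) 1, ℝ))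
    {p : Icc (0:ℝ) 1} (hp : p ∈ D n) : |x p| ≤ seminormD D n x :=
  le_ciSup (sD_bdd D n x) (⟨p, hp⟩ : D n)

lemma sD_nonneg (D : ℕ → Set (Icc (0:ℝ) 1)) (n : ℕ) (x : C(Icc (0:ℝ) 1, ℝ)) :
    0 ≤ seminormD D n x := Real.iSup_nonneg fun _ => abs_nonneg _

lemma sD_le (D : ℕ → Set (Icc (0:ℝ) 1)) (n : ℕ) (x : C(Icc (0:ℝ) 1, ℝ)) :
    seminormD D n x ≤ ‖x‖ :=
  Real.iSup_le (fun d => x.norm_coe_le_norm d) (norm_nonneg _)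

lemma sD_mono (D : ℕ → Set (Icc (0:ℝ) 1)) (n : ℕ) {x y : C(Icc (0:ℝ) 1, ℝ)}
    (h : ∀ t, |y t| ≤ |x t|) : seminormD D n y ≤ seminormD D n x :=
  Real.iSup_le (fun d => (h d).trans (le_sD D n x d.2)) (sD_nonneg _ _ _)

lemma nD_summable (D : ℕ → Set (Icc (0:ℝ) 1)) (x : C(Icc (0:ℝ) 1, ℝ)) :
    Summable fun n : ℕ => (1 / 2 : ℝ) ^ (n + 1) * (seminormD D n x) ^ 2 := by
  have h : Summable fun n : ℕ => (1 / 2 : ℝ) ^ (n + 1) * ‖x‖ ^ 2 :=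
    ((summable_nat_add_iff 1).2 summable_geometric_two).mul_right _
  refine h.of_nonneg_of_le (fun n => by positivity) fun n => ?_
  have := sD_le D n x
  have := sD_nonneg D n x
  gcongr

lemma nD_mono (D : ℕ → Set (Icc (0:ℝ) 1)) {x y : C(Icc (0:ℝ) 1, ℝ)}
    (h : ∀ t, |y t| ≤ |x t|) : normD D y ≤ normD D x := by
  refine Real.sqrt_le_sqrt ((nD_summable D y).tsum_le_tsum (fun n => ?_) (nD_summable D x))
  have := sD_mono D n h
  have := sD_nonneg D n y
  gcongr

/-- Points of `D n` where `|x|` almost attains its supremum: an infinite set. -/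
lemma W_infinite (D : ℕ → Set (Icc (0:ℝ) 1)) (n : ℕ) (hop : IsOpen (D n)) (hne : (D n).Nonempty)
    (x : C(Icc (0:ℝ) 1, ℝ)) (c : ℝ) (hc : c < 1) :
    {p | p ∈ D n ∧ c * seminormD D n x ≤ |x p|}.Infinite := by
  rcases (sD_nonneg D n x).eq_or_lt with h0 | h0
  · obtain ⟨p, hp⟩ := hne
    refine (infinite_of_mem_nhds p (hop.mem_nhds hp)).mono fun q hq => ⟨hq, ?_⟩
    rw [← h0]; simp
  · have : Nonempty (D n) := hne.to_subtype
    have hlt : c * seminormD D n x < ⨆ d : D n, |x d| := by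
      change _ < seminormD D n x
      nlinarith
    obtain ⟨p, hp⟩ := exists_lt_of_lt_ciSup hlt
    have ho : IsOpen {q | c * seminormD D n x < |x q|} :=
      isOpen_lt continuous_const (by fun_prop)
    refine (infinite_of_mem_nhds p.1 ((hop.inter ho).mem_nhds ⟨p.2, hp⟩)).mono ?_
    exact fun q hq => ⟨hq.1, le_of_lt hq.2⟩

/-- Disjoint finite sets each meeting the given finitely many infinite sets. -/
lemma exists_F {α : Type*} (W : ℕ → Set α) (hW : ∀ n, (W n).Infinite) (N : ℕ) :
    ∃ F : ℕ → Finset α, (∀ k, ∀ n < N, ∃ p ∈ F k, p ∈ W n) ∧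
      ∀ j k, j ≠ k → Disjoint (F j) (F k) := by
  classical
  obtain ⟨F, h1, h2⟩ := exists_seq_of_forall_finset_exists
    (fun F : Finset α => ∀ n < N, ∃ p ∈ F, p ∈ W n) (fun F G => Disjoint F G) (by
      intro s _
      have : ∀ n, ∃ p ∈ W n, p ∉ s.biUnion id := fun n => (hW n).exists_notMem_finset _
      choose p hp hps using this
      refine ⟨(Finset.range N).image p, fun n hn => ⟨p n, ?_, hp n⟩, fun G hG => ?_⟩
      · exact Finset.mem_image_of_mem _ (Finset.mem_range.2 hn)
      · rw [Finset.disjoint_left]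
        intro a ha ha'
        obtain ⟨n, _, rfl⟩ := Finset.mem_image.1 ha'
        exact hps n (Finset.mem_biUnion.2 ⟨G, hG, ha⟩))
  refine ⟨F, h1, fun j k hjk => ?_⟩
  rcases lt_or_gt_of_ne hjk with h | h
  · exact h2 _ _ h
  · exact (h2 _ _ h).symm

lemma exists_phi {X : Type*} [TopologicalSpace X] [T2Space X] [CompactSpace X]
    (F : ℕ → Finset X) (hF : ∀ j k, j ≠ k → Disjoint (F j) (F k)) (K : ℕ) (hK : 0 < K) :
    ∃ φ : Fin K → C(X, ℝ), (∀ k t, 0 ≤ φ k t) ∧ (∀ t, ∑ k, φ k t = 1) ∧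
      ∀ k : Fin K, ∀ p ∈ F k, φ k p = 1 := by
  classical
  let U : Fin K → Set X := fun k => ⋂ j : Fin K, ⋂ _ : j ≠ k, ((F j : Set X))ᶜ
  have hU : ∀ k, IsOpen (U k) := fun k =>
    isOpen_iInter_of_finite fun j => isOpen_iInter_of_finite fun _ =>
      (F j).finite_toSet.isClosed.isOpen_compl
  have hcov : (univ : Set X) ⊆ ⋃ k, U k := by
    intro t _
    rw [mem_iUnion]
    by_cases h : ∃ k : Fin K, t ∈ F k
    · obtain ⟨k, hk⟩ := h
      refine ⟨k, ?_⟩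
      simp only [U, mem_iInter]
      intro j hj ht
      exact Finset.disjoint_left.1 (hF j k (fun e => hj (Fin.ext e))) ht hk
    · refine ⟨⟨0, hK⟩, ?_⟩
      simp only [U, mem_iInter]
      intro j _ ht
      exact h ⟨j, ht⟩
  obtain ⟨ρ, hρ⟩ := PartitionOfUnity.exists_isSubordinate isClosed_univ U hU hcov
  have hsum : ∀ t, ∑ k, ρ k t = 1 := fun t => by
    rw [← finsum_eq_sum_of_fintype]; exact ρ.sum_eq_one (mem_univ t)
  refine ⟨fun k => ρ k, fun k t => ρ.nonneg k t, hsum, fun k p hp => ?_⟩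
  rw [← hsum p, Finset.sum_eq_single k]
  · intro j _ hj
    by_contra hne
    have := hρ j (subset_tsupport _ hne)
    simp only [U, mem_iInter] at this
    exact this k hj.symm hp
  · simp

/-- For any base `D` of nonempty open sets of `[0,1]`, the space `X_D = (C[0,1], ‖·‖_D)`
has the local diameter 2 property +. -/
theorem normD_LD2P_plus (D : ℕ → Set (Icc (0:ℝ) 1))
    (hDopen : ∀ n, IsOpen (D n)) (hDne : ∀ n, (D n).Nonempty)
    (hbasis : TopologicalSpace.IsTopologicalBasis (Set.range D)) :
    ∀ f : C(Icc (0:ℝ) 1, ℝ) →ₗ[ℝ] ℝ, DualNormOneD D f →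
      ∀ ε : ℝ, 0 < ε → ∀ δ : ℝ, 0 < δ →
        ∀ x : C(Icc (0:ℝ) 1, ℝ), normD D x ≤ 1 → f x > 1 - ε → normD D x = 1 →
          ∃ y : C(Icc (0:ℝ) 1, ℝ), normD D y ≤ 1 ∧ f y > 1 - ε ∧
            normD D (x - y) > 2 - δ := by
  intro f hf ε hε δ hδ x _ hfx hx1
  obtain ⟨c, hc0, hc1, hcδ⟩ : ∃ c : ℝ, 0 < c ∧ c < 1 ∧ 2 - δ < 2 * c ^ 2 := by
    refine ⟨max (1 / 2) (1 - δ / 4), by positivity, max_lt (by norm_num) (by linarith), ?_⟩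
    have h1 := le_max_left (1 / 2 : ℝ) (1 - δ / 4)
    have h2 := le_max_right (1 / 2 : ℝ) (1 - δ / 4)
    nlinarith [sq_nonneg (max (1 / 2 : ℝ) (1 - δ / 4) - 1), sq_pos_of_pos hδ,
      sq_nonneg (max (1 / 2 : ℝ) (1 - δ / 4) - (1 - δ / 4)),
      mul_nonneg (sub_nonneg.2 h2) (sub_nonneg.2 h1)]
  -- truncation
  have hs1 : ∑' n : ℕ, (1 / 2 : ℝ) ^ (n + 1) * (seminormD D n x) ^ 2 = 1 := by
    have := hx1
    unfold normD at this
    rwa [Real.sqrt_eq_one] at this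
  obtain ⟨N, hN⟩ : ∃ N : ℕ, c ^ 2 <
      ∑ n ∈ Finset.range N, (1 / 2 : ℝ) ^ (n + 1) * (seminormD D n x) ^ 2 := by
    have ht := (nD_summable D x).hasSum.tendsto_sum_nat
    rw [hs1] at ht
    exact (ht.eventually (lt_mem_nhds (by nlinarith : c ^ 2 < 1))).exists
  set η := (f x - (1 - ε)) / 2 with hη
  have hη0 : 0 < η := by rw [hη]; linarith
  obtain ⟨K, hK⟩ := exists_nat_gt (1 / η)
  have hKpos : 0 < K := by
    have : (0:ℝ) < K := lt_trans (by positivity) hK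
    exact_mod_cast this
  obtain ⟨F, hFW, hFd⟩ := exists_F (fun n => {p | p ∈ D n ∧ c * seminormD D n x ≤ |x p|})
    (fun n => W_infinite D n (hDopen n) (hDne n) x c hc1) N
  obtain ⟨φ, hφ0, hφ1, hφF⟩ := exists_phi F hFd K hKpos
  have hsumle : ∑ k, |f (x * φ k)| ≤ 1 := by
    let s : Fin K → ℝ := fun k => SignType.sign (f (x * φ k))
    have hs : ∀ k, |s k| ≤ 1 := by
      intro k
      rcases lt_trichotomy (f (x * φ k)) 0 with h | h | h <;> simp [s, h]
    have e : ∑ k, |f (x * φ k)| = f (∑ k, s k • (x * φ k)) := by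
      rw [map_sum]
      refine Finset.sum_congr rfl fun k _ => ?_
      rw [map_smul, smul_eq_mul]
      exact (sign_mul_self _).symm
    rw [e]
    refine (le_abs_self _).trans ((hf.1 _).trans ((nD_mono D fun t => ?_).trans hx1.le))
    have e2 : (∑ k, s k • (x * φ k)) t = x t * ∑ k, s k * φ k t := by
      rw [ContinuousMap.sum_apply, Finset.mul_sum]
      refine Finset.sum_congr rfl fun k _ => ?_
      simp; ring
    rw [e2, abs_mul]
    refine mul_le_of_le_one_right (abs_nonneg _) ((Finset.abs_sum_le_sum_abs _ _).trans ?_)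
    refine le_trans ?_ (hφ1 t).le
    refine Finset.sum_le_sum fun k _ => ?_
    rw [abs_mul, abs_of_nonneg (hφ0 k t)]
    exact mul_le_of_le_one_left (hφ0 k t) (hs k)
  obtain ⟨k, hk⟩ : ∃ k, |f (x * φ k)| < η := by
    by_contra! hcon
    have h1 : (K : ℝ) * η ≤ ∑ k, |f (x * φ k)| := by
      calc (K : ℝ) * η = ∑ _k : Fin K, η := by simp
        _ ≤ _ := Finset.sum_le_sum fun k _ => hcon k
    rw [div_lt_iff₀ hη0] at hK
    linarith
  have hφle : ∀ t, φ k t ≤ 1 := fun t => by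
    refine le_trans ?_ (hφ1 t).le
    exact Finset.single_le_sum (f := fun k => φ k t) (fun j _ => hφ0 j t) (Finset.mem_univ k)
  refine ⟨x - (2:ℝ) • (x * φ k), ?_, ?_, ?_⟩
  · refine (nD_mono D fun t => ?_).trans hx1.le
    have e : (x - (2:ℝ) • (x * φ k)) t = x t * (1 - 2 * φ k t) := by
      simp; ring
    rw [e, abs_mul]
    refine mul_le_of_le_one_right (abs_nonneg _) (abs_le.2 ⟨?_, ?_⟩)
    · linarith [hφle t]
    · linarith [hφ0 k t]
  · rw [map_sub, map_smul, smul_eq_mul]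
    have := (abs_lt.1 hk).2
    rw [hη] at this
    linarith
  · rw [sub_sub_cancel]
    refine hcδ.trans_le (Real.le_sqrt_of_sq_le ?_)
    have hle := (nD_summable D ((2:ℝ) • (x * φ k))).sum_le_tsum (Finset.range N)
      (fun n _ => by positivity)
    refine le_trans ?_ hle
    have : ∑ n ∈ Finset.range N, (2 * c) ^ 2 * ((1 / 2 : ℝ) ^ (n + 1) * (seminormD D n x) ^ 2) ≤
        ∑ n ∈ Finset.range N,
          (1 / 2 : ℝ) ^ (n + 1) * (seminormD D n ((2:ℝ) • (x * φ k))) ^ 2 := by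
      refine Finset.sum_le_sum fun n hn => ?_
      obtain ⟨p, hpF, hpD, hp⟩ := hFW k n (Finset.mem_range.1 hn)
      have h1 := le_sD D n ((2:ℝ) • (x * φ k)) hpD
      have e : ((2:ℝ) • (x * φ k)) p = 2 * x p := by simp [hφF k p hpF]
      rw [e, abs_mul, abs_two] at h1
      have h0 := sD_nonneg D n x
      have h2 : 2 * c * seminormD D n x ≤ seminormD D n ((2:ℝ) • (x * φ k)) := by linarith
      calc _ = (1 / 2 : ℝ) ^ (n + 1) * (2 * c * seminormD D n x) ^ 2 := by ring
        _ ≤ _ := by gcongr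
    refine le_trans ?_ this
    rw [← Finset.mul_sum]
    nlinarith [sq_pos_of_pos hc0]
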